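/- arXiv:2308.05119 — 2 statements merged into one kernel-verified Lean document; each statement's English description precedes it below -/
import Mathlib

section
/- Every Gr-category is equivalent, as a monoidal category, to a strict Gr-category, i.e., one whose associator and left and right unitors are identity natural transformations. -/
/-!
Strictify an arbitrary monoidal category `C` by finite lists of objects: a list stands for its
right-bracketed tensor product in `C`, and a morphism of lists is a morphism between these
products. Concatenation of lists is associative and unital on the nose. It agrees with the tensor
product of `C` up to a coherence isomorphism, and the point is that this isomorphism carries the
associator and the unitors of `C` to identities. Evaluating lists is then a fully faithful monoidal
functor, essentially surjective since `[X]` evaluates to `X ⊗ 𝟙_ C ≅ X`. Finally, invertibility of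
morphisms and objects passes along full, essentially surjective monoidal functors.
-/

open CategoryTheory MonoidalCategory

universe v u v' u'

/-- A Gr-category: a monoidal category in which every morphism is invertible and
every object is invertible. -/
def IsGrCategory (C : Type u) [Category.{v} C] [MonoidalCategory C] : Prop :=
  (∀ {X Y : C} (f : X ⟶ Y), IsIso f) ∧
  (∀ X : C, ∃ Y : C, Nonempty (X ⊗ Y ≅ 𝟙_ C) ∧ Nonempty (Y ⊗ X ≅ 𝟙_ C))

/-- An equivalence of monoidal categories: monoidal functors in both directions together with
monoidal natural isomorphisms to the identity functors. -/
structure MonoidalEquiv (C : Type u) (D : Type u') [Category.{v} C] [MonoidalCategory C]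
    [Category.{v'} D] [MonoidalCategory D] where
  F : C ⥤ D
  G : D ⥤ C
  [monF : F.Monoidal]
  [monG : G.Monoidal]
  unitIso : F ⋙ G ≅ 𝟭 C
  counitIso : G ⋙ F ≅ 𝟭 D
  [unit_isMonoidal : NatTrans.IsMonoidal unitIso.hom]
  [counit_isMonoidal : NatTrans.IsMonoidal counitIso.hom]

/-- A strict Gr-category monoidally equivalent to `C`: the associator and both unitors
are identity natural transformations. -/
structure StrictGrModel (C : Type u) [Category.{v} C] [MonoidalCategory C] where
  D : Type u
  [cat : Category.{v} D]
  [mon : MonoidalCategory D]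
  gr : IsGrCategory D
  assoc_obj_eq : ∀ X Y Z : D, (X ⊗ Y) ⊗ Z = X ⊗ (Y ⊗ Z)
  associator_eq_id : ∀ X Y Z : D, (α_ X Y Z).hom = eqToHom (assoc_obj_eq X Y Z)
  unit_tensor_obj_eq : ∀ X : D, 𝟙_ D ⊗ X = X
  leftUnitor_eq_id : ∀ X : D, (λ_ X).hom = eqToHom (unit_tensor_obj_eq X)
  tensor_unit_obj_eq : ∀ X : D, X ⊗ 𝟙_ D = X
  rightUnitor_eq_id : ∀ X : D, (ρ_ X).hom = eqToHom (tensor_unit_obj_eq X)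
  equiv : MonoidalEquiv C D

namespace IsGrCategory

variable {C : Type u} [Category.{v} C] [MonoidalCategory C]
  {D : Type u'} [Category.{v'} D] [MonoidalCategory D]

lemma of_full_essSurj (hC : IsGrCategory C) (F : C ⥤ D) [F.Monoidal] [F.Full] [F.EssSurj] :
    IsGrCategory D := by
  refine ⟨fun {X Y} f ↦ ?_, fun X ↦ ?_⟩
  · let eX : F.obj (F.objPreimage X) ≅ X := F.objObjPreimageIso X
    let eY : F.obj (F.objPreimage Y) ≅ Y := F.objObjPreimageIso Y
    obtain ⟨g, hg⟩ := F.map_surjective (eX.hom ≫ f ≫ eY.inv)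
    have : IsIso g := hC.1 g
    have hf : f = eX.inv ≫ F.map g ≫ eY.hom := by simp [hg]
    rw [hf]
    infer_instance
  · obtain ⟨Z, ⟨right⟩, ⟨left⟩⟩ := hC.2 (F.objPreimage X)
    let e : F.obj (F.objPreimage X) ≅ X := F.objObjPreimageIso X
    exact ⟨F.obj Z,
      ⟨whiskerRightIso e.symm _ ≪≫ Functor.Monoidal.μIso F _ _ ≪≫ F.mapIso right ≪≫
        (Functor.Monoidal.εIso F).symm⟩,
      ⟨whiskerLeftIso _ e.symm ≪≫ Functor.Monoidal.μIso F _ _ ≪≫ F.mapIso left ≪≫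
        (Functor.Monoidal.εIso F).symm⟩⟩

end IsGrCategory

namespace MonoidalEquiv

variable {C : Type u} [Category.{v} C] [MonoidalCategory C]
  {D : Type u'} [Category.{v'} D] [MonoidalCategory D]

/-- The monoidal equivalence given by an equivalence of categories which is monoidal in Mathlib's
sense, namely through its unit and counit. -/
def ofEquivalence (e : C ≌ D) [e.functor.Monoidal] [e.inverse.Monoidal] [e.IsMonoidal] :
    MonoidalEquiv C D where
  F := e.functor
  G := e.inverse
  unitIso := e.unitIso.symm
  counitIso := e.counitIso
  unit_isMonoidal :=
    haveI : NatTrans.IsMonoidal e.unitIso.hom := inferInstanceAs (NatTrans.IsMonoidal e.unit)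
    inferInstanceAs (NatTrans.IsMonoidal e.unitIso.inv)
  counit_isMonoidal := inferInstanceAs (NatTrans.IsMonoidal e.counit)

/-- The monoidal equivalence whose backward functor is a given monoidal functor; its forward
functor is a quasi-inverse with the monoidal structure determined by the adjunction. -/
noncomputable def ofInverse (G : D ⥤ C) [G.Monoidal] [G.IsEquivalence] : MonoidalEquiv C D :=
  letI : G.asEquivalence.functor.Monoidal := inferInstanceAs G.Monoidal
  letI : G.asEquivalence.inverse.Monoidal := G.asEquivalence.inverseMonoidal
  haveI : G.asEquivalence.IsMonoidal := ⟨rfl, fun _ _ ↦ rfl⟩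
  ofEquivalence G.asEquivalence.symm

lemma isGrCategory (e : MonoidalEquiv C D) (hC : IsGrCategory C) : IsGrCategory D :=
  have := e.monF
  have : e.F.IsEquivalence :=
    (CategoryTheory.Equivalence.mk e.F e.G e.unitIso.symm e.counitIso).isEquivalence_functor
  hC.of_full_essSurj e.F

end MonoidalEquiv

/-- A monoidal category is strict if its associator and unitors are identities. As the equality of
objects need not be definitional, identities are expressed by `eqToHom`. -/
structure IsStrictMonoidal (D : Type u) [Category.{v} D] [MonoidalCategory D] : Prop where
  assoc_obj_eq (X Y Z : D) : (X ⊗ Y) ⊗ Z = X ⊗ (Y ⊗ Z)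
  associator_eq_id (X Y Z : D) : (α_ X Y Z).hom = eqToHom (assoc_obj_eq X Y Z)
  unit_tensor_obj_eq (X : D) : 𝟙_ D ⊗ X = X
  leftUnitor_eq_id (X : D) : (λ_ X).hom = eqToHom (unit_tensor_obj_eq X)
  tensor_unit_obj_eq (X : D) : X ⊗ 𝟙_ D = X
  rightUnitor_eq_id (X : D) : (ρ_ X).hom = eqToHom (tensor_unit_obj_eq X)

section

variable {C : Type u} [Category.{v} C] [MonoidalCategory C]

/-- The right-bracketed tensor product of a list of objects, ending in the unit object.
It is reducible so that `simp` can see through it in the types of morphisms. -/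
abbrev listTensor : List C → C
  | [] => 𝟙_ C
  | X :: l => X ⊗ listTensor l

/-- The coherence isomorphism by which `listTensor` takes concatenation to the tensor product. -/
def listTensorAppendIso : ∀ l m : List C, listTensor l ⊗ listTensor m ≅ listTensor (l ++ m)
  | [], m => λ_ (listTensor m)
  | X :: l, m => α_ X (listTensor l) (listTensor m) ≪≫ whiskerLeftIso X (listTensorAppendIso l m)

lemma eqToHom_listTensor_append_nil (l : List C) :
    eqToHom (congrArg listTensor l.append_nil) =
      (listTensorAppendIso l []).inv ≫ (ρ_ (listTensor l)).hom := by
  induction l with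
  | nil =>
    change 𝟙 (𝟙_ C) = (λ_ (𝟙_ C)).inv ≫ (ρ_ (𝟙_ C)).hom
    simp [← unitors_equal]
  | cons X l ih =>
    calc
      _ = X ◁ eqToHom (congrArg listTensor l.append_nil) := (whiskerLeft_eqToHom _ _).symm
      _ = X ◁ ((listTensorAppendIso l []).inv ≫ (ρ_ (listTensor l)).hom) := by rw [ih]
      _ = (X ◁ (listTensorAppendIso l []).inv ≫ (α_ X (listTensor l) (𝟙_ C)).inv) ≫
          (ρ_ (X ⊗ listTensor l)).hom := by simp
      _ = (listTensorAppendIso (X :: l) []).inv ≫ (ρ_ (listTensor (X :: l))).hom := rfl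

lemma eqToHom_listTensor_append_assoc (l m n : List C) :
    eqToHom (congrArg listTensor (l.append_assoc m n)) =
      (listTensorAppendIso (l ++ m) n).inv ≫ (listTensorAppendIso l m).inv ▷ listTensor n ≫
        (α_ (listTensor l) (listTensor m) (listTensor n)).hom ≫
          listTensor l ◁ (listTensorAppendIso m n).hom ≫
            (listTensorAppendIso l (m ++ n)).hom := by
  induction l with
  | nil => simp [listTensorAppendIso]
  | cons X l ih =>
    calc
      _ = X ◁ eqToHom (congrArg listTensor (l.append_assoc m n)) := (whiskerLeft_eqToHom _ _).symm
      _ = X ◁ ((listTensorAppendIso (l ++ m) n).inv ≫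
            (listTensorAppendIso l m).inv ▷ listTensor n ≫
              (α_ (listTensor l) (listTensor m) (listTensor n)).hom ≫
                listTensor l ◁ (listTensorAppendIso m n).hom ≫
                  (listTensorAppendIso l (m ++ n)).hom) := by rw [ih]
      -- the pentagon for `X` and the tensor products of `l`, `m`, `n`
      _ = _ := by simp [listTensorAppendIso]

end

/-- The strictification of `C`: lists of objects, with the morphisms of `C` between their tensor
products. -/
abbrev Strictification (C : Type u) [Category.{v} C] [MonoidalCategory C] : Type u :=
  InducedCategory C (listTensor : List C → C)

namespace Strictification

variable (C : Type u) [Category.{v} C] [MonoidalCategory C]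

instance : MonoidalCategoryStruct (Strictification C) where
  tensorObj := fun (l m : List C) ↦ l ++ m
  tensorUnit := ([] : List C)
  whiskerLeft l _ _ f :=
    ⟨(listTensorAppendIso l _).inv ≫ listTensor l ◁ f.hom ≫ (listTensorAppendIso l _).hom⟩
  whiskerRight f m :=
    ⟨(listTensorAppendIso _ m).inv ≫ f.hom ▷ listTensor m ≫ (listTensorAppendIso _ m).hom⟩
  tensorHom f g :=
    ⟨(listTensorAppendIso _ _).inv ≫ (f.hom ⊗ₘ g.hom) ≫ (listTensorAppendIso _ _).hom⟩
  associator l m n := eqToIso (List.append_assoc l m n)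
  leftUnitor l := eqToIso (List.nil_append l)
  rightUnitor l := eqToIso (List.append_nil l)

/-- Evaluation of lists, the functor sending a list to its tensor product in `C`. -/
abbrev evaluation : Strictification C ⥤ C := inducedFunctor listTensor

/-- The compatibility of evaluation with the monoidal operations, through `listTensorAppendIso`,
from which the monoidal category axioms of `Strictification C` are deduced. -/
def evaluationInducingData : Monoidal.InducingFunctorData (evaluation C) where
  μIso l m := listTensorAppendIso l m
  εIso := Iso.refl _
  associator_eq l m n := by
    simp only [Iso.trans_hom, Iso.symm_hom, tensorIso_hom, Iso.refl_hom, tensorHom_id,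
      id_tensorHom, Category.assoc]
    exact (InducedCategory.eqToHom_hom (List.append_assoc l m n)).trans
      (eqToHom_listTensor_append_assoc l m n)
  leftUnitor_eq l := by
    have h : 𝟙 (listTensor l) = ((λ_ (listTensor l)).inv ≫ (𝟙 (𝟙_ C) ⊗ₘ 𝟙 (listTensor l))) ≫
        (λ_ (listTensor l)).hom := by simp
    exact (InducedCategory.eqToHom_hom (List.nil_append l)).trans h
  rightUnitor_eq l := by
    have h : eqToHom (congrArg listTensor (List.append_nil l)) =
        ((listTensorAppendIso l []).inv ≫ (𝟙 (listTensor l) ⊗ₘ 𝟙 (𝟙_ C))) ≫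
          (ρ_ (listTensor l)).hom := by
      simp [eqToHom_listTensor_append_nil]
    exact (InducedCategory.eqToHom_hom (List.append_nil l)).trans h

instance : MonoidalCategory (Strictification C) :=
  Monoidal.induced (evaluation C) (evaluationInducingData C)

instance : (evaluation C).Monoidal :=
  Monoidal.fromInducedMonoidal (evaluation C) (evaluationInducingData C)

instance : (evaluation C).EssSurj where
  mem_essImage X := ⟨([X] : List C), ⟨ρ_ X⟩⟩

instance : (evaluation C).IsEquivalence where

lemma isStrictMonoidal : IsStrictMonoidal (Strictification C) where
  assoc_obj_eq := List.append_assoc (α := C)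
  associator_eq_id _ _ _ := rfl
  unit_tensor_obj_eq := List.nil_append (α := C)
  leftUnitor_eq_id _ := rfl
  tensor_unit_obj_eq := List.append_nil (α := C)
  rightUnitor_eq_id _ := rfl

end Strictification

theorem every_gr_category_is_equivalent_to_a_strict_gr_category_general
    (C : Type u) [Category.{v} C] [MonoidalCategory C] :
    ∃ (D : Type u) (_ : Category.{v} D) (_ : MonoidalCategory D),
      IsStrictMonoidal D ∧ Nonempty (MonoidalEquiv C D) :=
  ⟨Strictification C, inferInstance, inferInstance, Strictification.isStrictMonoidal C,
    ⟨.ofInverse (Strictification.evaluation C)⟩⟩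

/-- Every Gr-category is equivalent, as a monoidal category, to a strict Gr-category. -/
theorem every_gr_category_is_equivalent_to_a_strict_gr_category
    (C : Type u) [Category.{v} C] [MonoidalCategory C] (hC : IsGrCategory C) :
    Nonempty (StrictGrModel C) := by
  obtain ⟨D, _, _, hD, ⟨e⟩⟩ := every_gr_category_is_equivalent_to_a_strict_gr_category_general C
  exact ⟨{ hD with D, gr := e.isGrCategory hC, equiv := e }⟩
end

section
/- Two restrained Pic-categories 𝒢 and ℋ are equivalent as Pic-categories if and only if both of the following hold: the abelian group of isomorphism classes of objects of 𝒢 (with multiplication induced by ⊗) is isomorphic to the abelian group of isomorphism classes of objects of ℋ, and the abelian group Aut(I_𝒢) of automorphisms of the unit object of 𝒢 is isomorphic to the abelian group Aut(I_ℋ). -/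
/-!
After passing to a skeleton, let `A` be the group of objects of a restrained Pic-category and `B`
the automorphism group of its unit. Tensoring with automorphisms of the unit identifies every
automorphism group with `B`, so the associator and the braiding become functions `h` and `c` on `A`
with values in `B`, subject to cocycle conditions. Being restrained means that `c` is alternating;
hence `c` is the antisymmetrization of some `w`, for instance `c` cut off by a linear order of `A`,
and a change of tensorator by `w` makes the braiding trivial.

What is left is an associator compatible with the trivial braiding, which is again the coboundary of
a symmetric 2-cochain. On `ℤ` this is a difference equation. On a free abelian group, the canonical
isomorphisms `(x + x') + (y + y') ⟶ (x + y) + (x' + y')` make it possible to add one coordinate at a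
time. Along a surjection from a free abelian group onto `A` the trivialization descends, because the
kernel is projective. So the category is equivalent to the strict model built from `A` and `B`, and
isomorphic pairs of groups have equivalent models.
-/

open CategoryTheory MonoidalCategory

universe v u v' u'

/-- An equivalence of symmetric monoidal categories: symmetric monoidal functors in both
directions together with monoidal natural isomorphisms to the identity functors. -/
structure SymmetricMonoidalEquiv (C : Type u) (D : Type u')
    [Category.{v} C] [MonoidalCategory C] [SymmetricCategory C]
    [Category.{v'} D] [MonoidalCategory D] [SymmetricCategory D] where
  F : C ⥤ D
  G : D ⥤ C
  [monF : F.Braided]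
  [monG : G.Braided]
  unitIso : F ⋙ G ≅ 𝟭 C
  counitIso : G ⋙ F ≅ 𝟭 D
  [unit_isMonoidal : NatTrans.IsMonoidal unitIso.hom]
  [counit_isMonoidal : NatTrans.IsMonoidal counitIso.hom]

/-- The multiplication induced by the tensor product on the set of isomorphism classes of
objects of a monoidal category. -/
def tensorIsoClass {C : Type u} [Category.{v} C] [MonoidalCategory C] :
    Quotient (CategoryTheory.isIsomorphicSetoid C) →
      Quotient (CategoryTheory.isIsomorphicSetoid C) →
      Quotient (CategoryTheory.isIsomorphicSetoid C) :=
  Quotient.map₂ (· ⊗ ·) fun _ _ h₁ _ _ h₂ => ⟨tensorIso h₁.some h₂.some⟩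

theorem exists_injective_addCircle (M : Type*) [AddCommGroup M] :
    ∃ ι : M →ₗ[ℤ] (CharacterModule M → AddCircle (1 : ℚ)), Function.Injective ι :=
  ⟨LinearMap.pi fun c => c.toIntLinearMap, (injective_iff_map_eq_zero _).mpr fun _ h =>
    CharacterModule.eq_zero_of_character_apply (congrFun h)⟩

theorem exists_mkQ_comp_eq_of_injective {N P D : Type*} [AddCommGroup N] [AddCommGroup P]
    [AddCommGroup D] [Module.Projective ℤ P] [DivisibleBy D ℤ] {i : N →ₗ[ℤ] P}
    (hi : Function.Injective i) (K : Submodule ℤ D) (g : N →ₗ[ℤ] D ⧸ K) :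
    ∃ l : N →ₗ[ℤ] D, K.mkQ ∘ₗ l = g := by
  let _ : DivisibleBy (D ⧸ K) ℤ :=
    K.mkQ_surjective.divisibleBy (α := ℤ) K.mkQ fun x n => map_zsmul K.mkQ n x
  obtain ⟨g', rfl⟩ := (Module.Baer.of_divisible _).extension_property i hi g
  obtain ⟨l, rfl⟩ := Module.projective_lifting_property K.mkQ g' K.mkQ_surjective
  exact ⟨l ∘ₗ i, rfl⟩

theorem projective_of_injective_int {N P : Type*} [AddCommGroup N] [AddCommGroup P]
    [Module.Projective ℤ P] {i : N →ₗ[ℤ] P} (hi : Function.Injective i) :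
    Module.Projective ℤ N := by
  -- Given a surjection onto `N`, embed its source into a divisible group. A section exists modulo
  -- the image of the kernel. It lifts, since quotients of divisible groups are injective and `P` is
  -- projective.
  refine .of_lifting_property'' fun f hf => ?_
  obtain ⟨ι, hι⟩ := exists_injective_addCircle (N →₀ ℤ)
  let K := f.ker.map ι
  let g : N →ₗ[ℤ] _ ⧸ K :=
    f.ker.mapQ K ι (Submodule.le_comap_map ι _) ∘ₗ (f.quotKerEquivOfSurjective hf).symm
  obtain ⟨l, hl⟩ := exists_mkQ_comp_eq_of_injective hi K g
  have exists_preimage (x : N) : ∃ y, ι y = l x ∧ f y = x := by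
    obtain ⟨y, rfl⟩ := hf x
    have hly : K.mkQ (l (f y)) = K.mkQ (ι y) := by
      trans g (f y)
      · exact LinearMap.congr_fun hl (f y)
      · simp [g]
    obtain ⟨k, hk, hky⟩ := (Submodule.Quotient.eq K).mp hly
    refine ⟨y + k, by rw [map_add, hky, add_sub_cancel], ?_⟩
    rw [map_add, LinearMap.mem_ker.mp hk, add_zero]
  have mem_range (x : N) : ∃ y, ι y = l x := (exists_preimage x).imp fun _ => And.left
  refine ⟨LinearMap.codRestrictOfInjective l ι hι mem_range, LinearMap.ext fun x => ?_⟩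
  obtain ⟨y, hy, hfy⟩ := exists_preimage x
  have : LinearMap.codRestrictOfInjective l ι hι mem_range x = y :=
    hι ((LinearMap.codRestrictOfInjective_comp_apply ..).trans hy.symm)
  rw [LinearMap.comp_apply, this, hfy, LinearMap.id_apply]

section StrictCocycles

variable {A A' B : Type*} [AddCommMonoid A] [AddCommMonoid A'] [AddCommGroup B]

/-- The 3-cochain that measures the failure of the 2-cochain `m` to be a cocycle. The sign is
chosen so that `m` trivializes the associator of a monoidal structure with tensorator `-m`. -/
def coboundary (m : A → A → B) (x y z : A) : B :=
  m x y + m (x + y) z - m y z - m x (y + z)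

/-- The coboundaries of symmetric 2-cochains, that is, the associators that can be trivialized
without changing the trivial braiding. -/
def IsSymmCoboundary (h : A → A → A → B) : Prop :=
  ∃ m : A → A → B, (∀ x y, m x y = m y x) ∧ ∀ x y z, coboundary m x y z = h x y z

/-- The coherence laws for an associator `h` that forms a symmetric monoidal structure together
with trivial braiding and trivial unitors. -/
structure IsStrictCocycle (h : A → A → A → B) : Prop where
  pentagon : ∀ w x y z,
    h w x y + h w (x + y) z + h x y z = h (w + x) y z + h w x (y + z)
  hexagon : ∀ x y z, h x y z + h y z x = h y x z
  zero_left : ∀ y z, h 0 y z = 0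

/-- The value of the canonical isomorphism `(x + x') + (y + y') ⟶ (x + y) + (x' + y')` for the
associator `h` and trivial braiding, where `u = (x, x')` and `v = (y, y')`. -/
def interchange (h : A → A → A → B) (u v : A × A) : B :=
  h u.1 u.2 (v.1 + v.2) - h u.2 v.1 v.2 + h v.1 u.2 v.2 - h u.1 v.1 (u.2 + v.2)

theorem IsSymmCoboundary.exists_normalized {h : A → A → A → B} (hh : IsSymmCoboundary h) :
    ∃ m : A → A → B, m 0 0 = 0 ∧ (∀ x y, m x y = m y x) ∧
      ∀ x y z, coboundary m x y z = h x y z := by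
  obtain ⟨m, m_symm, hm⟩ := hh
  refine ⟨fun x y => m x y - m 0 0, sub_self _, fun x y => congr($(m_symm x y) - m 0 0),
    fun x y z => ?_⟩
  rw [← hm]
  simp only [coboundary]
  abel

theorem sub_swap_add_right {m : A → A → B}
    (hm : ∀ x y z, coboundary m x y z + coboundary m y z x = coboundary m y x z) (x y z : A) :
    m x (y + z) - m (y + z) x = (m x y - m y x) + (m x z - m z x) := by
  have := hm x y z
  simp only [coboundary, add_comm y x, add_comm z x] at this
  grind

namespace IsStrictCocycle

variable {h : A → A → A → B}

theorem comp (hh : IsStrictCocycle h) (f : A' →+ A) :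
    IsStrictCocycle fun x y z => h (f x) (f y) (f z) where
  pentagon w x y z := by simpa only [map_add] using hh.pentagon (f w) (f x) (f y) (f z)
  hexagon x y z := hh.hexagon (f x) (f y) (f z)
  zero_left y z := by simpa only [map_zero] using hh.zero_left (f y) (f z)

theorem zero_right (hh : IsStrictCocycle h) (x y : A) : h x y 0 = 0 := by
  have := hh.hexagon x 0 y
  have := hh.hexagon 0 x y
  have := hh.hexagon y 0 x
  have := hh.hexagon 0 y x
  grind [hh.zero_left]

theorem zero_middle (hh : IsStrictCocycle h) (x y : A) : h x 0 y = 0 := by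
  have := hh.hexagon 0 x y
  grind [hh.zero_left x y, hh.zero_right x y, hh.zero_right]

theorem interchange_comm (hh : IsStrictCocycle h) (u v : A × A) :
    interchange h u v = interchange h v u := by
  obtain ⟨x, x'⟩ := u
  obtain ⟨y, y'⟩ := v
  have := hh.pentagon x y y' x'
  have := hh.pentagon y y' x x'
  have := hh.pentagon y x y' x'
  have := hh.hexagon (y + y') x x'
  have := hh.hexagon x y y'
  have := hh.hexagon x' y y'
  simp only [interchange, add_comm, add_left_comm] at *
  grind

-- This is the coherence of the interchange isomorphism with associators, i.e. the fact that the
-- tensor product of a symmetric monoidal category is itself a monoidal functor.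
theorem coboundary_interchange (hh : IsStrictCocycle h) (u v w : A × A) :
    coboundary (interchange h) u v w =
      h (u.1 + u.2) (v.1 + v.2) (w.1 + w.2) - h u.1 v.1 w.1 - h u.2 v.2 w.2 := by
  obtain ⟨x, x'⟩ := u
  obtain ⟨y, y'⟩ := v
  obtain ⟨z, z'⟩ := w
  have := hh.pentagon x x' (y + y') (z + z')
  have := hh.pentagon x y z (x' + y' + z')
  have := hh.pentagon x y (x' + y') (z + z')
  have := hh.pentagon y x' y' (z + z')
  have := hh.pentagon y z x' (y' + z')
  have := hh.pentagon x' y z (y' + z')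
  have := hh.pentagon x' y y' (z + z')
  have := hh.pentagon z x' y' z'
  have := hh.pentagon x' y' z z'
  have := hh.pentagon y x' z (y' + z')
  have := hh.pentagon x' z y' z'
  have := hh.hexagon x' y z
  have := hh.hexagon z x' y'
  simp only [coboundary, interchange, Prod.fst_add, Prod.snd_add, add_comm, add_left_comm] at *
  grind

end IsStrictCocycle

section Int

theorem exists_int_antidifference (F : ℤ → B) :
    ∃ G : ℤ → B, G 0 = 0 ∧ ∀ n, G (n + 1) = G n + F n := by
  refine ⟨fun n => n.inductionOn' 0 0 (fun k _ b => b + F k) (fun k _ b => b - F (k - 1)),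
    Int.inductionOn'_self, fun n => ?_⟩
  obtain hn | hn := le_or_gt 0 n
  · exact Int.inductionOn'_add_one hn
  · have hpred := Int.inductionOn'_sub_one (motive := fun _ => B) (zero := 0)
      (succ := fun k _ b => b + F k) (pred := fun k _ b => b - F (k - 1)) (show n + 1 ≤ 0 by lia)
    rw [add_sub_cancel_right] at hpred
    exact (eq_sub_iff_add_eq.mp hpred).symm

-- The pentagon at `(1, x, y, z)` determines `h` from its values at `(1, x, z)`, so a solution `m`
-- of the difference equation `m (x + 1) z = m x z + h 1 x z` with `m 0 z = 0` trivializes `h`.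
theorem IsStrictCocycle.exists_coboundary_eq_int {h : ℤ → ℤ → ℤ → B} (hh : IsStrictCocycle h) :
    ∃ m : ℤ → ℤ → B, ∀ x y z, coboundary m x y z = h x y z := by
  choose g g_zero g_succ using fun z => exists_int_antidifference (h 1 · z)
  let m (x z : ℤ) : B := g z x
  let d (x y z : ℤ) : B := h x y z - coboundary m x y z
  have d_succ (x y z : ℤ) : d (x + 1) y z = d x y z := by
    have := hh.pentagon 1 x y z
    have := g_succ z (x + y)
    simp only [d, m, coboundary, add_right_comm x 1 y, g_succ]
    grind
  refine ⟨m, fun x y z => (sub_eq_zero.mp ?_).symm⟩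
  change d x y z = 0
  induction x with
  | zero => simp [d, m, coboundary, g_zero, hh.zero_left]
  | succ x ih => rw [d_succ, ih]
  | pred x ih => rw [← d_succ, sub_add_cancel, ih]

theorem IsStrictCocycle.isSymmCoboundary_int {h : ℤ → ℤ → ℤ → B} (hh : IsStrictCocycle h) :
    IsSymmCoboundary h := by
  obtain ⟨m, hm⟩ := hh.exists_coboundary_eq_int
  refine ⟨m, fun x y => ?_, hm⟩
  -- The antisymmetrization of `m` is biadditive, hence determined by its value at `(1, 1)`.
  let d (x : ℤ) : ℤ →+ B :=
    AddMonoidHom.mk' (fun y => m x y - m y x)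
      (sub_swap_add_right (by simpa only [hm] using hh.hexagon) x)
  have d_swap (x y : ℤ) : d x y = - d y x := (neg_sub _ _).symm
  have d_one : d 1 = 0 := AddMonoidHom.ext_int (sub_self _)
  have d_eq_zero : d x = 0 := AddMonoidHom.ext_int (by rw [d_swap, d_one]; simp)
  exact sub_eq_zero.mp (DFunLike.congr_fun d_eq_zero y)

end Int

section Finsupp

variable {S : Type*} [LinearOrder S] {h : (S →₀ ℤ) → (S →₀ ℤ) → (S →₀ ℤ) → B}
  {p : S → ℤ → ℤ → B}

/-- The part of `x : S →₀ ℤ` strictly below `s`, and its part at `s`. -/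
noncomputable def splitAt (s : S) : (S →₀ ℤ) →+ (S →₀ ℤ) × (S →₀ ℤ) :=
  (Finsupp.filterAddHom (· < s)).prod ((Finsupp.singleAddHom s).comp (Finsupp.applyAddHom s))

theorem splitAt_apply (s : S) (x : S →₀ ℤ) :
    splitAt s x = (x.filter (· < s), Finsupp.single s (x s)) :=
  rfl

theorem splitAt_splitAt_fst {s t : S} (hst : s < t) (x : S →₀ ℤ) :
    splitAt s (splitAt t x).1 = splitAt s x := by
  refine Prod.ext (Finsupp.ext fun u => ?_) (by simp [splitAt_apply, hst])
  simp only [splitAt_apply, Finsupp.filter_apply]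
  grind [hst.trans']

theorem support_splitAt_fst_subset {T : Finset S} {s : S} {x : S →₀ ℤ}
    (hx : x.support ⊆ insert s T) : (splitAt s x).1.support ⊆ T := by
  intro t ht
  simp only [splitAt_apply, Finsupp.support_filter, Finset.mem_filter] at ht
  exact Finset.mem_of_mem_insert_of_ne (hx ht.1) ht.2.ne

theorem splitAt_fst_add_snd {T : Finset S} {s : S} (hT : ∀ t ∈ T, t < s) {x : S →₀ ℤ}
    (hx : x.support ⊆ insert s T) : (splitAt s x).1 + (splitAt s x).2 = x := by
  ext t
  have hxt (hst : s < t) : x t = 0 := by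
    by_contra hxt
    have ht := Finset.mem_of_mem_insert_of_ne (hx (Finsupp.mem_support_iff.mpr hxt)) hst.ne'
    exact hst.asymm (hT t ht)
  obtain hts | rfl | hst := lt_trichotomy t s
  · simp [splitAt_apply, hts, hts.ne]
  · simp [splitAt_apply]
  · simp [splitAt_apply, hst.not_gt, hst.ne, hxt hst]

/-- The contribution of the coordinate `s` to a trivialization of the associator `h` on `S →₀ ℤ`,
given trivializations `p` on the coordinate axes. It compares `h` on the coordinates up to `s` with
`h` on the coordinates below `s`. -/
noncomputable def layer (h : (S →₀ ℤ) → (S →₀ ℤ) → (S →₀ ℤ) → B) (p : S → ℤ → ℤ → B)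
    (s : S) (x y : S →₀ ℤ) : B :=
  p s (x s) (y s) + interchange h (splitAt s x) (splitAt s y)

theorem coboundary_layer (hh : IsStrictCocycle h)
    (hp : ∀ s a b c, coboundary (p s) a b c =
      h (Finsupp.single s a) (Finsupp.single s b) (Finsupp.single s c))
    {T : Finset S} {s : S} (hT : ∀ t ∈ T, t < s) {x y z : S →₀ ℤ}
    (hx : x.support ⊆ insert s T) (hy : y.support ⊆ insert s T) (hz : z.support ⊆ insert s T) :
    coboundary (layer h p s) x y z =
      h x y z - h (splitAt s x).1 (splitAt s y).1 (splitAt s z).1 := by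
  have hinter := hh.coboundary_interchange (splitAt s x) (splitAt s y) (splitAt s z)
  have hps : coboundary (p s) (x s) (y s) (z s) =
      h (splitAt s x).2 (splitAt s y).2 (splitAt s z).2 := hp s _ _ _
  simp only [splitAt_fst_add_snd hT, hx, hy, hz] at hinter
  simp only [coboundary, layer, map_add, Finsupp.add_apply] at hinter hps ⊢
  grind

theorem coboundary_sum_layer (hh : IsStrictCocycle h)
    (hp : ∀ s a b c, coboundary (p s) a b c =
      h (Finsupp.single s a) (Finsupp.single s b) (Finsupp.single s c)) (T : Finset S) :
    ∀ {x y z : S →₀ ℤ}, x.support ⊆ T → y.support ⊆ T → z.support ⊆ T →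
      coboundary (fun x y => ∑ s ∈ T, layer h p s x y) x y z = h x y z := by
  induction T using Finset.induction_on_max with
  | empty =>
    intro x y z hx _ _
    obtain rfl : x = 0 := by simpa using hx
    simp [coboundary, hh.zero_left]
  | insert s T hT ih =>
    intro x y z hx hy hz
    have hs : s ∉ T := fun hs => (hT s hs).false
    have htrunc (x y : S →₀ ℤ) : ∑ t ∈ T, layer h p t x y =
        ∑ t ∈ T, layer h p t (splitAt s x).1 (splitAt s y).1 :=
      Finset.sum_congr rfl fun t ht => by
        have hval (x : S →₀ ℤ) : (splitAt s x).1 t = x t :=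
          Finsupp.filter_apply_pos (· < s) x (hT t ht)
        simp only [layer, splitAt_splitAt_fst (hT t ht), hval]
    have hcob := ih (support_splitAt_fst_subset hx) (support_splitAt_fst_subset hy)
      (support_splitAt_fst_subset hz)
    have hlayer := coboundary_layer hh hp hT hx hy hz
    simp only [coboundary, Finset.sum_insert hs] at hlayer hcob ⊢
    simp only [htrunc x, htrunc (x + y), htrunc y, map_add, Prod.fst_add]
    grind

theorem IsStrictCocycle.isSymmCoboundary_finsupp (hh : IsStrictCocycle h) :
    IsSymmCoboundary h := by
  choose p p_zero p_symm hp using fun s : S =>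
    (hh.comp (Finsupp.singleAddHom s)).isSymmCoboundary_int.exists_normalized
  let m (x y : S →₀ ℤ) : B := ∑ s ∈ x.support ∪ y.support, layer h p s x y
  have layer_eq_zero {s : S} {x y : S →₀ ℤ} (hs : s ∉ x.support ∪ y.support) :
      layer h p s x y = 0 := by
    simp only [Finset.mem_union, Finsupp.mem_support_iff, not_or, not_not] at hs
    simp [layer, splitAt_apply, interchange, hs, p_zero, hh.zero_left, hh.zero_middle,
      hh.zero_right]
  have m_eq_sum {x y : S →₀ ℤ} {T : Finset S} (hx : x.support ⊆ T) (hy : y.support ⊆ T) :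
      m x y = ∑ s ∈ T, layer h p s x y :=
    Finset.sum_subset (Finset.union_subset hx hy) fun s _ hs => layer_eq_zero hs
  refine ⟨m, fun x y => ?_, fun x y z => ?_⟩
  · simp only [m, layer, p_symm _ (x _), hh.interchange_comm (splitAt _ x),
      Finset.union_comm x.support]
  · let T := x.support ∪ y.support ∪ z.support
    have hx : x.support ⊆ T := by grind
    have hy : y.support ⊆ T := by grind
    have hz : z.support ⊆ T := by grind
    have hxy : (x + y).support ⊆ T := Finsupp.support_add.trans (Finset.union_subset hx hy)
    have hyz : (y + z).support ⊆ T := Finsupp.support_add.trans (Finset.union_subset hy hz)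
    rw [← coboundary_sum_layer hh hp T hx hy hz]
    simp only [coboundary, m_eq_sum hx hy, m_eq_sum hxy hz, m_eq_sum hy hz, m_eq_sum hx hyz]

end Finsupp

end StrictCocycles

section Descent

variable {R B : Type*} [AddCommGroup R] [AddCommGroup B]

/-- The extension of `R` by `B` defined by a symmetric 2-cocycle `n`. -/
@[ext]
structure CocycleExtension (n : R → R → B) where
  base : R
  fiber : B

namespace CocycleExtension

variable {n : R → R → B}

instance : Add (CocycleExtension n) :=
  ⟨fun p q => ⟨p.base + q.base, p.fiber + q.fiber + n p.base q.base⟩⟩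

-- The fiber of `0` is `-n 0 0` because `n` is not assumed to be normalized.
instance : Zero (CocycleExtension n) := ⟨⟨0, -n 0 0⟩⟩

instance : Neg (CocycleExtension n) :=
  ⟨fun p => ⟨-p.base, -p.fiber - n p.base (-p.base) - n 0 0⟩⟩

/-- The commutative group structure on the extension. It depends on proofs about `n` and hence is
not an instance. -/
abbrev addCommGroup (n_symm : ∀ r s, n r s = n s r) (hn : ∀ r s t, coboundary n r s t = 0) :
    AddCommGroup (CocycleExtension n) :=
  { AddGroup.ofLeftAxioms
      (fun p q r => CocycleExtension.ext (add_assoc p.base q.base r.base) (by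
        have := hn p.base q.base r.base
        change p.fiber + q.fiber + n _ _ + r.fiber + n (p.base + q.base) _ =
          p.fiber + (q.fiber + r.fiber + n _ _) + n _ (q.base + r.base)
        grind [coboundary]))
      (fun p => CocycleExtension.ext (zero_add p.base) (by
        have := hn 0 0 p.base
        change -n 0 0 + p.fiber + n 0 p.base = p.fiber
        grind [coboundary]))
      (fun p => CocycleExtension.ext (neg_add_cancel p.base) (by
        change -p.fiber - n p.base (-p.base) - n 0 0 + p.fiber + n (-p.base) p.base = -n 0 0
        rw [n_symm p.base]
        abel)) with
    add_comm := fun p q => CocycleExtension.ext (add_comm p.base q.base)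
      (congrArg₂ (· + ·) (add_comm p.fiber q.fiber) (n_symm p.base q.base)) }

end CocycleExtension

theorem exists_add_eq_of_coboundary_eq_zero [Module.Projective ℤ R] {n : R → R → B}
    (n_symm : ∀ r s, n r s = n s r) (hn : ∀ r s t, coboundary n r s t = 0) :
    ∃ σ : R → B, ∀ r s, σ (r + s) = σ r + σ s + n r s := by
  let _ := CocycleExtension.addCommGroup n_symm hn
  let π : CocycleExtension n →ₗ[ℤ] R :=
    (AddMonoidHom.mk' CocycleExtension.base fun _ _ => rfl).toIntLinearMap
  obtain ⟨s, hs⟩ := Module.projective_lifting_property π .id fun r => ⟨⟨r, 0⟩, rfl⟩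
  have base_s (r : R) : (s r).base = r := LinearMap.congr_fun hs r
  refine ⟨fun r => (s r).fiber, fun r t => ?_⟩
  have := congrArg CocycleExtension.fiber (map_add s r t)
  exact this.trans congr((s r).fiber + (s t).fiber + n $(base_s r) $(base_s t))

theorem exists_add_eq_of_coboundary_submodule_eq_zero {K : Submodule ℤ R} [Module.Projective ℤ K]
    {m : R → R → B} (m_symm : ∀ x y, m x y = m y x)
    (hm : ∀ (r : K) (x y : R), coboundary m r x y = 0) :
    ∃ (ν : R → B) (σ : K → B), ∀ (r : K) (x : R), ν (r + x) = ν x + σ r + m r x := by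
  obtain ⟨σ, hσ⟩ := exists_add_eq_of_coboundary_eq_zero (n := fun r s : K => m r s)
    (fun r s => m_symm r s) (fun r s t => hm r s t)
  let rep (x : R) : R := (K.mkQ x).out
  have mkQ_rep (x : R) : K.mkQ (rep x) = K.mkQ x := Quotient.out_eq' _
  let k (x : R) : K := ⟨x - rep x, (Submodule.Quotient.eq K).mp (mkQ_rep x).symm⟩
  refine ⟨fun x => σ (k x) + m (k x) (rep x), σ, fun r x => ?_⟩
  have mkQ_add : K.mkQ (r + x) = K.mkQ x := by
    rw [map_add, Submodule.mkQ_apply, (Submodule.Quotient.mk_eq_zero K).mpr r.2, zero_add]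
  have rep_add : rep (r + x) = rep x := congrArg Quotient.out mkQ_add
  have k_add : k (r + x) = r + k x := Subtype.ext (by simp [k, rep_add, add_sub_assoc])
  have hx : (k x : R) + rep x = x := sub_add_cancel _ _
  have := hm r (k x) (rep x)
  simp only [coboundary, hx] at this
  simp only [rep_add, k_add, hσ, Submodule.coe_add]
  grind

variable {A : Type*} [AddCommGroup A]

theorem IsSymmCoboundary.of_comp_surjective {h : A → A → A → B} {f : R →ₗ[ℤ] A}
    (hf : Function.Surjective f) [Module.Projective ℤ (LinearMap.ker f)]
    (h_zero : ∀ y z, h 0 y z = 0)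
    (hm : IsSymmCoboundary fun x y z => h (f x) (f y) (f z)) : IsSymmCoboundary h := by
  obtain ⟨m, m_symm, hm⟩ := hm
  have hker (r : LinearMap.ker f) (x y : R) : coboundary m r x y = 0 := by
    simp only [hm, LinearMap.map_coe_ker, h_zero]
  obtain ⟨ν, σ, hν⟩ := exists_add_eq_of_coboundary_submodule_eq_zero m_symm hker
  let m' (x y : R) : B := m x y + ν x + ν y - ν (x + y)
  have m'_symm (x y : R) : m' x y = m' y x := by
    simp only [m', m_symm x, add_comm x]
    abel
  have m'_congr_left {x x' : R} (hx : f x = f x') (y : R) : m' x y = m' x' y := by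
    let r : LinearMap.ker f := ⟨x - x', by rw [LinearMap.mem_ker, map_sub, hx, sub_self]⟩
    have hx' : x = r + x' := (sub_add_cancel x x').symm
    have hν_x := hν r x'
    have hν_xy := hν r (x' + y)
    have := hker r x' y
    rw [← add_assoc, ← hx'] at hν_xy
    rw [← hx'] at hν_x
    simp only [coboundary, ← hx'] at this
    simp only [m']
    grind
  let rep := Function.surjInv hf
  have f_rep (a : A) : f (rep a) = a := Function.surjInv_eq hf a
  have m'_rep (x y : R) : m' (rep (f x)) (rep (f y)) = m' x y := by
    rw [m'_congr_left (f_rep _), m'_symm, m'_congr_left (f_rep _), m'_symm]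
  refine ⟨fun a b => m' (rep a) (rep b), fun a b => m'_symm _ _, hf.forall₃.mpr fun x y z => ?_⟩
  simp only [coboundary, ← map_add, m'_rep, ← hm]
  simp only [m', add_assoc x]
  abel

theorem IsStrictCocycle.isSymmCoboundary {h : A → A → A → B} (hh : IsStrictCocycle h) :
    IsSymmCoboundary h := by
  let _ : LinearOrder A := WellOrderingRel.isWellOrder.linearOrder
  let f : (A →₀ ℤ) →ₗ[ℤ] A := Finsupp.linearCombination ℤ id
  have hf : Function.Surjective f := Finsupp.linearCombination_id_surjective ℤ A
  have := projective_of_injective_int f.ker.injective_subtype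
  exact .of_comp_surjective hf hh.zero_left (hh.comp f.toAddMonoidHom).isSymmCoboundary_finsupp

end Descent

section PicCocycles

variable {A B : Type*} [AddCommGroup B]

/-- The coherence laws for the associator `h` and the braiding `c` of a restrained Pic-category
with group of objects `A` and automorphism group of the unit `B`. -/
structure IsPicCocycle [AddCommMonoid A] (h : A → A → A → B) (c : A → A → B) : Prop where
  pentagon : ∀ w x y z,
    h w x y + h w (x + y) z + h x y z = h (w + x) y z + h w x (y + z)
  hexagon : ∀ x y z, h x y z + c x (y + z) + h y z x = c x y + h y x z + c x z
  symmetry : ∀ x y, c x y + c y x = 0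
  restrained : ∀ x, c x x = 0

namespace IsPicCocycle

section AddCommMonoid

variable [AddCommMonoid A] {h : A → A → A → B} {c : A → A → B}

theorem sub_coboundary (hc : IsPicCocycle h c) (m : A → A → B) :
    IsPicCocycle (fun x y z => h x y z - coboundary m x y z)
      (fun x y => c x y - (m x y - m y x)) where
  pentagon w x y z := by
    have := hc.pentagon w x y z
    simp only [coboundary, add_assoc] at this ⊢
    grind
  hexagon x y z := by
    have := hc.hexagon x y z
    simp only [coboundary, add_comm y x, add_comm z x]
    grind
  symmetry x y := by
    have := hc.symmetry x y
    grind
  restrained x := by rw [hc.restrained, sub_self, sub_zero]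

-- Any linear order on `A` distinguishes one of the two braidings of each pair of distinct elements;
-- on the diagonal the braiding vanishes because the category is restrained.
theorem exists_eq_sub_swap (hc : IsPicCocycle h c) :
    ∃ w : A → A → B, ∀ x y, c x y = w x y - w y x := by
  let _ : LinearOrder A := WellOrderingRel.isWellOrder.linearOrder
  refine ⟨fun x y => if x < y then c x y else 0, fun x y => ?_⟩
  obtain hxy | rfl | hyx := lt_trichotomy x y
  · simp [hxy, hxy.not_gt]
  · simp [hc.restrained]
  · simpa [hyx, hyx.not_gt] using eq_neg_of_add_eq_zero_left (hc.symmetry x y)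

theorem isStrictCocycle_sub_coboundary (hc : IsPicCocycle h 0) :
    IsStrictCocycle fun x y z =>
      h x y z - coboundary (fun x y => - h 0 0 x - h 0 0 y) x y z := by
  have hc' := hc.sub_coboundary fun x y => - h 0 0 x - h 0 0 y
  refine ⟨hc'.pentagon, fun x y z => ?_, fun y z => ?_⟩
  · have := hc'.hexagon x y z
    simp only [Pi.zero_apply] at this
    grind
  · have := hc.pentagon 0 0 y z
    simp only [coboundary, zero_add] at this ⊢
    grind

end AddCommMonoid

theorem exists_trivialization [AddCommGroup A] {h : A → A → A → B} {c : A → A → B}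
    (hc : IsPicCocycle h c) :
    ∃ m : A → A → B, (∀ x y z, h x y z = coboundary m x y z) ∧
      ∀ x y, c x y = m x y - m y x := by
  obtain ⟨w, hw⟩ := hc.exists_eq_sub_swap
  have hcw : IsPicCocycle (fun x y z => h x y z - coboundary w x y z) 0 := by
    convert hc.sub_coboundary w using 1
    funext x y
    exact (sub_eq_zero.mpr (hw x y)).symm
  obtain ⟨m, m_symm, hm⟩ := hcw.isStrictCocycle_sub_coboundary.isSymmCoboundary
  let e (x : A) : B := h 0 0 x - coboundary w 0 0 x
  refine ⟨fun x y => w x y + (- e x - e y) + m x y, fun x y z => ?_, fun x y => ?_⟩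
  · have := hm x y z
    simp only [coboundary, e] at this ⊢
    grind
  · beta_reduce
    rw [hw, m_symm x y]
    abel

end IsPicCocycle

end PicCocycles

namespace SymmetricMonoidalEquiv

variable {C : Type u} [Category.{v} C] [MonoidalCategory C] [SymmetricCategory C]
  {D : Type u'} [Category.{v'} D] [MonoidalCategory D] [SymmetricCategory D]

/-- The equivalence of underlying categories. -/
def toEquivalence (s : SymmetricMonoidalEquiv C D) : C ≌ D :=
  .mk s.F s.G s.unitIso.symm s.counitIso

/-- The inverse equivalence. -/
def symm (s : SymmetricMonoidalEquiv C D) : SymmetricMonoidalEquiv D C :=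
  { F := s.G, G := s.F, unitIso := s.counitIso, counitIso := s.unitIso
    monF := s.monG, monG := s.monF
    unit_isMonoidal := s.counit_isMonoidal, counit_isMonoidal := s.unit_isMonoidal }

theorem μ_inverse_braiding (e : C ≌ D) [e.functor.Braided] [e.inverse.Monoidal]
    [e.IsMonoidal] (X Y : D) :
    Functor.LaxMonoidal.μ e.inverse X Y ≫ e.inverse.map (β_ X Y).hom =
      (β_ (e.inverse.obj X) (e.inverse.obj Y)).hom ≫ Functor.LaxMonoidal.μ e.inverse Y X := by
  apply e.functor.map_injective
  rw [← cancel_mono (e.counitIso.hom.app _)]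
  simp [Equivalence.functor_map_μ_inverse_comp_counitIso_hom_app_tensor,
    Equivalence.functor_map_μ_inverse_comp_counit_app_tensor_assoc]

theorem nonempty_of_equivalence (e : C ≌ D) [e.functor.Braided] :
    Nonempty (SymmetricMonoidalEquiv C D) := by
  let inverse_monoidal : e.inverse.Monoidal := e.inverseMonoidal
  have : e.IsMonoidal := ⟨rfl, fun _ _ => rfl⟩
  let _ : e.inverse.Braided := { inverse_monoidal with braided := μ_inverse_braiding e }
  have : NatTrans.IsMonoidal e.unitIso.hom :=
    inferInstanceAs (NatTrans.IsMonoidal e.toAdjunction.unit)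
  exact ⟨{
    F := e.functor
    G := e.inverse
    unitIso := e.unitIso.symm
    counitIso := e.counitIso
    unit_isMonoidal := inferInstanceAs (NatTrans.IsMonoidal e.unitIso.inv)
    counit_isMonoidal := inferInstanceAs (NatTrans.IsMonoidal e.toAdjunction.counit) }⟩

theorem nonempty_of_functor (F : C ⥤ D) [h : F.Braided] [F.IsEquivalence] :
    Nonempty (SymmetricMonoidalEquiv C D) :=
  have : F.asEquivalence.functor.Braided := h
  nonempty_of_equivalence F.asEquivalence

theorem nonempty_trans {E : Type*} [Category E] [MonoidalCategory E] [SymmetricCategory E]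
    (s : SymmetricMonoidalEquiv C D) (t : SymmetricMonoidalEquiv D E) :
    Nonempty (SymmetricMonoidalEquiv C E) :=
  have := s.monF
  have := t.monF
  have : s.F.IsEquivalence := s.toEquivalence.isEquivalence_functor
  have : t.F.IsEquivalence := t.toEquivalence.isEquivalence_functor
  nonempty_of_functor (s.F ⋙ t.F)

end SymmetricMonoidalEquiv

section Invariants

/-- Isomorphism of the two invariants of the classification: the sets of isomorphism classes with
their multiplication, and the automorphism groups of the units. -/
def HaveIsomorphicInvariants (C : Type*) [Category C] [MonoidalCategory C]
    (D : Type*) [Category D] [MonoidalCategory D] : Prop :=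
  (∃ φ : Quotient (isIsomorphicSetoid C) ≃ Quotient (isIsomorphicSetoid D),
    ∀ a b, φ (tensorIsoClass a b) = tensorIsoClass (φ a) (φ b)) ∧
  Nonempty (Aut (𝟙_ C) ≃* Aut (𝟙_ D))

variable {C : Type*} [Category C] [MonoidalCategory C] {D : Type*} [Category D] [MonoidalCategory D]
  {E : Type*} [Category E] [MonoidalCategory E]

theorem HaveIsomorphicInvariants.trans :
    HaveIsomorphicInvariants C D → HaveIsomorphicInvariants D E → HaveIsomorphicInvariants C E := by
  rintro ⟨⟨φ, hφ⟩, ⟨ψ⟩⟩ ⟨⟨φ', hφ'⟩, ⟨ψ'⟩⟩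
  exact ⟨⟨φ.trans φ', fun a b => by simp [hφ, hφ']⟩, ⟨ψ.trans ψ'⟩⟩

theorem SymmetricMonoidalEquiv.haveIsomorphicInvariants [SymmetricCategory C] [SymmetricCategory D]
    (s : SymmetricMonoidalEquiv C D) : HaveIsomorphicInvariants C D := by
  have := s.monF
  refine ⟨⟨⟨Quotient.map s.F.obj fun _ _ h => ⟨s.F.mapIso h.some⟩,
      Quotient.map s.G.obj fun _ _ h => ⟨s.G.mapIso h.some⟩, ?_, ?_⟩, ?_⟩, ⟨?_⟩⟩
  · rintro ⟨x⟩
    exact Quotient.sound ⟨s.unitIso.app x⟩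
  · rintro ⟨x⟩
    exact Quotient.sound ⟨s.counitIso.app x⟩
  · rintro ⟨x⟩ ⟨y⟩
    exact Quotient.sound ⟨(Functor.Monoidal.μIso s.F x y).symm⟩
  · exact (s.toEquivalence.fullyFaithfulFunctor.autMulEquivOfFullyFaithful (𝟙_ C)).trans
      (Functor.Monoidal.εIso s.F).symm.conjAut

end Invariants

section Skeleton

variable {C : Type u} [Category.{v} C] [MonoidalCategory C]
  {E : Type u'} [Category.{v'} E] [MonoidalCategory E]

theorem IsGrCategory.of_isEquivalence (hC : IsGrCategory C) (F : E ⥤ C) [F.Monoidal]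
    [F.IsEquivalence] : IsGrCategory E := by
  have preimage_iso {x y : E} (e : F.obj x ⊗ F.obj y ≅ 𝟙_ C) : Nonempty (x ⊗ y ≅ 𝟙_ E) :=
    ⟨F.preimageIso ((Functor.Monoidal.μIso F x y).symm ≪≫ e ≪≫ Functor.Monoidal.εIso F)⟩
  refine ⟨fun f => ?_, fun x => ?_⟩
  · have := hC.1 (F.map f)
    exact isIso_of_reflects_iso f F
  · obtain ⟨y, ⟨e⟩, ⟨e'⟩⟩ := hC.2 (F.obj x)
    let i := F.objObjPreimageIso y
    exact ⟨F.objPreimage y, preimage_iso (whiskerLeftIso _ i ≪≫ e),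
      preimage_iso (whiskerRightIso i _ ≪≫ e')⟩

theorem braiding_self_eq_id_of_faithful [SymmetricCategory C] [SymmetricCategory E]
    (F : E ⥤ C) [F.Braided] [F.Faithful] (hC : ∀ g : C, (β_ g g).hom = 𝟙 (g ⊗ g)) (g : E) :
    (β_ g g).hom = 𝟙 (g ⊗ g) :=
  F.map_injective (by simp [Functor.map_braiding, hC])

theorem exists_skeletal (C : Type u) [Category.{v} C] [MonoidalCategory C] [SymmetricCategory C] :
    ∃ (E : Type u) (_ : Category.{v} E) (_ : MonoidalCategory E) (_ : SymmetricCategory E)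
      (F : E ⥤ C), Skeletal E ∧ Nonempty F.Braided ∧ F.IsEquivalence :=
  ⟨Monoidal.Transported (skeletonEquivalence C).symm, inferInstance, inferInstance, inferInstance,
    (Monoidal.equivalenceTransported (skeletonEquivalence C).symm).inverse, skeleton_skeletal C,
    ⟨inferInstance⟩, inferInstance⟩

end Skeleton

/-- The strict restrained Pic-category with group of isomorphism classes `A` and group of
automorphisms of the unit `B`: objects are elements of `A`, and all structure isomorphisms are
trivial. -/
structure PicModel (A : Type u) (B : Type v) where
  cls : A

namespace PicModel

variable {A : Type u} {B : Type v}

/-- Morphisms `a ⟶ b` in `PicModel A B`: elements of `B`, which exist only if `a = b`. -/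
@[ext]
structure Hom (a b : PicModel A B) : Type v where
  val : B
  eq : a.cls = b.cls

variable [AddCommGroup B]

instance : Category (PicModel A B) where
  Hom := Hom
  id _ := ⟨0, rfl⟩
  comp f g := ⟨f.val + g.val, f.eq.trans g.eq⟩
  id_comp _ := Hom.ext (zero_add _)
  comp_id _ := Hom.ext (add_zero _)
  assoc _ _ _ := Hom.ext (add_assoc _ _ _)

@[ext] theorem hom_ext {a b : PicModel A B} {f g : a ⟶ b} (h : f.val = g.val) : f = g := Hom.ext h

@[simp] theorem id_val (a : PicModel A B) : (𝟙 a : a ⟶ a).val = 0 := rfl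

@[simp] theorem comp_val {a b c : PicModel A B} (f : a ⟶ b) (g : b ⟶ c) :
    (f ≫ g).val = f.val + g.val := rfl

/-- The isomorphism given by `t : B` between objects with equal classes. -/
def mkIso {a b : PicModel A B} (t : B) (h : a.cls = b.cls) : a ≅ b where
  hom := ⟨t, h⟩
  inv := ⟨-t, h.symm⟩
  hom_inv_id := by ext; simp
  inv_hom_id := by ext; simp

@[simp] theorem mkIso_hom_val {a b : PicModel A B} (t : B) (h : a.cls = b.cls) :
    (mkIso t h).hom.val = t := rfl

variable [AddCommGroup A]

instance : MonoidalCategoryStruct (PicModel A B) where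
  tensorObj a b := ⟨a.cls + b.cls⟩
  whiskerLeft a _ _ f := ⟨f.val, congrArg (a.cls + ·) f.eq⟩
  whiskerRight f b := ⟨f.val, congrArg (· + b.cls) f.eq⟩
  tensorHom f g := ⟨f.val + g.val, congrArg₂ (· + ·) f.eq g.eq⟩
  tensorUnit := ⟨0⟩
  associator _ _ _ := mkIso 0 (add_assoc _ _ _)
  leftUnitor _ := mkIso 0 (zero_add _)
  rightUnitor _ := mkIso 0 (add_zero _)

@[simp] theorem whiskerLeft_val (a : PicModel A B) {b c : PicModel A B} (f : b ⟶ c) :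
    (a ◁ f).val = f.val := rfl

@[simp] theorem whiskerRight_val {b c : PicModel A B} (f : b ⟶ c) (a : PicModel A B) :
    (f ▷ a).val = f.val := rfl

@[simp] theorem tensorHom_val {a b c d : PicModel A B} (f : a ⟶ b) (g : c ⟶ d) :
    (f ⊗ₘ g).val = f.val + g.val := rfl

@[simp] theorem associator_hom_val (a b c : PicModel A B) : (α_ a b c).hom.val = 0 := rfl

@[simp] theorem associator_inv_val (a b c : PicModel A B) : (α_ a b c).inv.val = 0 := neg_zero

@[simp] theorem leftUnitor_hom_val (a : PicModel A B) : (λ_ a).hom.val = 0 := rfl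

@[simp] theorem rightUnitor_hom_val (a : PicModel A B) : (ρ_ a).hom.val = 0 := rfl

instance : MonoidalCategory (PicModel A B) where
  tensorHom_def f g := by ext; simp
  id_tensorHom_id a b := by ext; simp
  tensorHom_comp_tensorHom f g h k := by ext; simp only [comp_val, tensorHom_val]; abel
  whiskerLeft_id a b := by ext; simp
  id_whiskerRight a b := by ext; simp
  associator_naturality f g h := by ext; simp [add_assoc]
  leftUnitor_naturality f := by ext; simp
  rightUnitor_naturality f := by ext; simp
  pentagon a b c d := by ext; simp
  triangle a b := by ext; simp

instance : SymmetricCategory (PicModel A B) where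
  braiding _ _ := mkIso 0 (add_comm _ _)
  braiding_naturality_right a b c f := by ext; simp
  braiding_naturality_left f c := by ext; simp
  hexagon_forward a b c := by ext; simp
  hexagon_reverse a b c := by ext; simp
  symmetry a b := by ext; simp

/-- The bijection from isomorphism classes of `PicModel A B` to `A`. -/
def isoClassEquiv : Quotient (isIsomorphicSetoid (PicModel A B)) ≃ A where
  toFun := Quotient.lift cls fun _ _ h => h.some.hom.eq
  invFun a := Quotient.mk _ ⟨a⟩
  left_inv := by rintro ⟨x⟩; rfl
  right_inv _ := rfl

theorem isoClassEquiv_tensorIsoClass (x y : Quotient (isIsomorphicSetoid (PicModel A B))) :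
    isoClassEquiv (tensorIsoClass x y) = isoClassEquiv x + isoClassEquiv y := by
  obtain ⟨x⟩ := x
  obtain ⟨y⟩ := y
  rfl

/-- The isomorphism from the automorphism group of the unit of `PicModel A B` to `B`. -/
def autUnitEquiv : Aut (𝟙_ (PicModel A B)) ≃* Multiplicative B where
  toFun s := .ofAdd s.hom.val
  invFun t := mkIso t.toAdd rfl
  left_inv _ := Iso.ext rfl
  right_inv _ := rfl
  map_mul' s t := congrArg Multiplicative.ofAdd (add_comm t.hom.val s.hom.val)

variable {A' : Type u'} {B' : Type v'} [AddCommGroup A'] [AddCommGroup B']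

/-- The functor between models induced by homomorphisms of the two groups. -/
def map (f : A →+ A') (g : B →+ B') : PicModel A B ⥤ PicModel A' B' where
  obj a := ⟨f a.cls⟩
  map h := ⟨g h.val, congrArg f h.eq⟩
  map_id _ := hom_ext (map_zero g)
  map_comp _ _ := hom_ext (map_add g _ _)

instance (f : A →+ A') (g : B →+ B') : (map f g).Braided :=
  let core : (map f g).CoreMonoidal :=
    { εIso := mkIso 0 (map_zero f).symm
      μIso a b := mkIso 0 (map_add f a.cls b.cls).symm
      μIso_hom_natural_left _ _ := hom_ext ((add_zero _).trans (zero_add _).symm)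
      μIso_hom_natural_right _ _ := hom_ext ((add_zero _).trans (zero_add _).symm)
      associativity _ _ _ := hom_ext <| by
        change (0 : B') + (0 + g 0) = 0 + (0 + 0)
        simp
      left_unitality _ := hom_ext <| by
        change (0 : B') = 0 + (0 + g 0)
        simp
      right_unitality _ := hom_ext <| by
        change (0 : B') = 0 + (0 + g 0)
        simp }
  { core.toMonoidal with
    braided _ _ := hom_ext <| by
      change 0 + g 0 = 0 + 0
      simp }

instance (f : A ≃+ A') (g : B ≃+ B') : (map (f : A →+ A') (g : B →+ B')).IsEquivalence where
  faithful := ⟨fun h => hom_ext (g.injective congr(($h).val))⟩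
  full := ⟨fun h => ⟨⟨g.symm h.val, f.injective h.eq⟩, hom_ext (g.apply_symm_apply _)⟩⟩
  essSurj := ⟨fun a => ⟨⟨f.symm a.cls⟩, ⟨mkIso 0 (f.apply_symm_apply _)⟩⟩⟩

theorem nonempty_symmetricMonoidalEquiv
    (h : HaveIsomorphicInvariants (PicModel A B) (PicModel A' B')) :
    Nonempty (SymmetricMonoidalEquiv (PicModel A B) (PicModel A' B')) := by
  obtain ⟨⟨φ, hφ⟩, ⟨ψ⟩⟩ := h
  let f₀ : A ≃ A' := (isoClassEquiv (B := B)).symm.trans (φ.trans isoClassEquiv)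
  let f : A ≃+ A' := .mk' f₀ fun a b => by
    have := isoClassEquiv_tensorIsoClass (φ (isoClassEquiv.symm a)) (φ (isoClassEquiv.symm b))
    rwa [← hφ] at this
  let g : B ≃+ B' :=
    AddEquiv.toMultiplicative.symm (autUnitEquiv.symm.trans (ψ.trans autUnitEquiv))
  exact SymmetricMonoidalEquiv.nonempty_of_functor (map (f : A →+ A') (g : B →+ B'))

end PicModel

section UnitAction

variable {C : Type u} [Category.{v} C] [MonoidalCategory C]

/-- The action of an endomorphism `b` of the unit on a morphism `f`: the tensor product `b ⊗ₘ f`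
read through the left unitors. -/
def unitAct (b : 𝟙_ C ⟶ 𝟙_ C) {x y : C} (f : x ⟶ y) : x ⟶ y :=
  (λ_ x).inv ≫ (b ⊗ₘ f) ≫ (λ_ y).hom

theorem unitAct_id {x y : C} (f : x ⟶ y) : unitAct (𝟙 _) f = f := by
  simp [unitAct]

theorem unitAct_comp (b b' : 𝟙_ C ⟶ 𝟙_ C) {x y z : C} (f : x ⟶ y) (g : y ⟶ z) :
    unitAct b f ≫ unitAct b' g = unitAct (b ≫ b') (f ≫ g) := by
  simp [unitAct]

theorem unitAct_unitAct (b b' : 𝟙_ C ⟶ 𝟙_ C) {x y : C} (f : x ⟶ y) :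
    unitAct b (unitAct b' f) = unitAct (b ≫ b') f := by
  have := unitAct_comp b (𝟙 _) (𝟙 x) (unitAct b' f)
  rw [unitAct_id, unitAct_comp] at this
  simpa using this.symm

theorem unitAct_tensor_left (b : 𝟙_ C ⟶ 𝟙_ C) {x y x' y' : C} (f : x ⟶ y) (g : x' ⟶ y') :
    unitAct b f ⊗ₘ g = unitAct b (f ⊗ₘ g) := by
  simp only [unitAct, leftUnitor_tensor_inv, leftUnitor_tensor_hom, Category.assoc,
    ← associator_naturality_assoc, Iso.hom_inv_id_assoc, ← tensorHom_id,
    tensorHom_comp_tensorHom, Category.id_comp, Category.comp_id]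

theorem unitAct_tensor_right [BraidedCategory C] (b : 𝟙_ C ⟶ 𝟙_ C) {x y x' y' : C}
    (f : x ⟶ y) (g : x' ⟶ y') : f ⊗ₘ unitAct b g = unitAct b (f ⊗ₘ g) := by
  have := unitAct_comp b (𝟙 _) (f ⊗ₘ g) (β_ y y').hom
  have := unitAct_comp (𝟙 _) b (β_ x x').hom (g ⊗ₘ f)
  rw [← cancel_mono (β_ y y').hom, BraidedCategory.braiding_naturality, unitAct_tensor_left]
  simp_all [unitAct_id]

theorem unitAct_tensor [BraidedCategory C] (b b' : 𝟙_ C ⟶ 𝟙_ C) {x y x' y' : C} (f : x ⟶ y)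
    (g : x' ⟶ y') : unitAct b f ⊗ₘ unitAct b' g = unitAct (b ≫ b') (f ⊗ₘ g) := by
  rw [unitAct_tensor_left, unitAct_tensor_right, unitAct_unitAct]

theorem IsGrCategory.isEquivalence_tensorRight (hC : IsGrCategory C) (x : C) :
    (tensorRight x).IsEquivalence := by
  obtain ⟨x', ⟨e⟩, ⟨e'⟩⟩ := hC.2 x
  exact (CategoryTheory.Equivalence.mk (tensorRight x) (tensorRight x')
    ((rightUnitorNatIso C).symm ≪≫ (tensoringRight C).mapIso e.symm ≪≫ tensorRightTensor x x')
    ((tensorRightTensor x' x).symm ≪≫ (tensoringRight C).mapIso e' ≪≫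
      rightUnitorNatIso C)).isEquivalence_functor

theorem IsGrCategory.unitAct_bijective (hC : IsGrCategory C) {x y : C} (f : x ⟶ y) :
    Function.Bijective fun s : Aut (𝟙_ C) => unitAct s.hom f := by
  have := hC.1 f
  have := hC.isEquivalence_tensorRight x
  have hom_bijective : Function.Bijective (Iso.hom : Aut (𝟙_ C) → (𝟙_ C ⟶ 𝟙_ C)) :=
    ⟨fun _ _ h => Iso.ext h, fun b => have := hC.1 b; ⟨asIso b, rfl⟩⟩
  have hfactor : (fun s : Aut (𝟙_ C) => unitAct s.hom f) =
      (λ_ x).homCongr (λ_ x ≪≫ asIso f) ∘ (tensorRight x).map ∘ Iso.hom := by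
    funext s
    trans (λ_ x).inv ≫ s.hom ▷ x ≫ (λ_ x).hom ≫ f
    · simp [unitAct, MonoidalCategory.tensorHom_def]
    · rfl
  rw [hfactor]
  exact (Equiv.bijective _).comp
    (((Functor.FullyFaithful.ofFullyFaithful _).map_bijective _ _).comp hom_bijective)

theorem aut_unit_mul_comm (s t : Aut (𝟙_ C)) : s * t = t * s := by
  have : t.hom ≫ s.hom = s.hom ≫ t.hom := by
    simpa [unitors_equal, unitors_inv_equal] using whisker_exchange s.hom t.hom
  exact Iso.ext this

end UnitAction

section Coordinates

/-- Coordinates on a skeletal Pic-category `C` with group of objects `A` and automorphism group of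
the unit `B`: composition and tensor product of morphisms become addition in `B`. -/
structure PicCoordinates (C : Type u) [Category.{v} C] [MonoidalCategory C]
    (A : Type u') (B : Type v') [AddCommGroup A] [AddCommGroup B] where
  cls : C ≃ A
  cls_tensor (x y : C) : cls (x ⊗ y) = cls x + cls y
  eq_of_hom {x y : C} (f : x ⟶ y) : x = y
  val {x y : C} (f : x ⟶ y) : B
  val_comp {x y z : C} (f : x ⟶ y) (g : y ⟶ z) : val (f ≫ g) = val f + val g
  val_tensor {x y x' y' : C} (f : x ⟶ y) (g : x' ⟶ y') : val (f ⊗ₘ g) = val f + val g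
  val_bijective (x : C) : Function.Bijective (val : (x ⟶ x) → B)

variable {C : Type u} [Category.{v} C] [MonoidalCategory C]

/-- The automorphism group of the unit as a commutative group. -/
abbrev autUnitCommGroup : CommGroup (Aut (𝟙_ C)) :=
  { (inferInstance : Group (Aut (𝟙_ C))) with mul_comm := aut_unit_mul_comm }

/-- The group of objects of a skeletal Pic-category, with addition `⊗`. -/
noncomputable abbrev skeletalAddCommGroup [BraidedCategory C] (hC : IsGrCategory C)
    (hskel : Skeletal C) : AddCommGroup C :=
  have hneg (x : C) : ∃ y : C, y ⊗ x = 𝟙_ C := (hC.2 x).imp fun _ h => hskel h.2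
  letI : Add C := ⟨(· ⊗ ·)⟩
  letI : Zero C := ⟨𝟙_ C⟩
  letI : Neg C := ⟨fun x => (hneg x).choose⟩
  { AddGroup.ofLeftAxioms (fun x y z => hskel ⟨α_ x y z⟩) (fun x => hskel ⟨λ_ x⟩)
      (fun x => (hneg x).choose_spec) with
    add_comm x y := hskel ⟨β_ x y⟩ }

theorem PicCoordinates.exists_of_skeletal [BraidedCategory C] (hC : IsGrCategory C)
    (hskel : Skeletal C) : ∃ (A : Type u) (B : Type v) (_ : AddCommGroup A) (_ : AddCommGroup B),
      Nonempty (PicCoordinates C A B) := by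
  let _ : CommGroup (Aut (𝟙_ C)) := autUnitCommGroup
  let _ : AddCommGroup C := skeletalAddCommGroup hC hskel
  refine ⟨C, Additive (Aut (𝟙_ C)), inferInstance, inferInstance, ⟨?_⟩⟩
  have eq_of_hom {x y : C} (f : x ⟶ y) : x = y := have := hC.1 f; hskel ⟨asIso f⟩
  let act {x y : C} (f : x ⟶ y) : Aut (𝟙_ C) ≃ (x ⟶ y) := .ofBijective _ (hC.unitAct_bijective f)
  exact
    { cls := .refl C
      cls_tensor _ _ := rfl
      eq_of_hom := eq_of_hom
      val f := .ofMul ((act (eqToHom (eq_of_hom f))).symm f)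
      val_comp {x y z} f g := by
        obtain rfl := eq_of_hom f
        obtain rfl := eq_of_hom g
        obtain ⟨s, rfl⟩ := (act (𝟙 x)).surjective f
        obtain ⟨t, rfl⟩ := (act (𝟙 x)).surjective g
        have : act (𝟙 x) s ≫ act (𝟙 x) t = act (𝟙 x) (s * t) := by
          rw [mul_comm]
          exact (unitAct_comp s.hom t.hom (𝟙 x) (𝟙 x)).trans
            congr(unitAct (s.hom ≫ t.hom) $(by simp))
        simp [this]
      val_tensor {x y x' y'} f g := by
        obtain rfl := eq_of_hom f
        obtain rfl := eq_of_hom g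
        obtain ⟨s, rfl⟩ := (act (𝟙 x)).surjective f
        obtain ⟨t, rfl⟩ := (act (𝟙 x')).surjective g
        have : act (𝟙 x) s ⊗ₘ act (𝟙 x') t = act (𝟙 (x ⊗ x')) (s * t) := by
          rw [mul_comm]
          exact (unitAct_tensor s.hom t.hom (𝟙 x) (𝟙 x')).trans
            congr(unitAct (s.hom ≫ t.hom) $(by simp))
        simp [this]
      val_bijective x := (act (𝟙 x)).symm.bijective.comp Additive.ofMul.bijective }

namespace PicCoordinates

variable {A : Type u'} {B : Type v'} [AddCommGroup A] [AddCommGroup B] (P : PicCoordinates C A B)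

theorem val_id (x : C) : P.val (𝟙 x) = 0 := by
  simpa using P.val_comp (𝟙 x) (𝟙 x)

theorem val_whiskerLeft (x : C) {y z : C} (f : y ⟶ z) : P.val (x ◁ f) = P.val f := by
  rw [← id_tensorHom, val_tensor, val_id, zero_add]

theorem val_whiskerRight {y z : C} (f : y ⟶ z) (x : C) : P.val (f ▷ x) = P.val f := by
  rw [← tensorHom_id, val_tensor, val_id, add_zero]

theorem val_inv {x y : C} (e : x ≅ y) : P.val e.inv = - P.val e.hom := by
  rw [eq_neg_iff_add_eq_zero, ← val_comp, e.inv_hom_id, val_id]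

theorem cls_unit : P.cls (𝟙_ C) = 0 := by
  simpa [P.cls_tensor] using congrArg P.cls (P.eq_of_hom (λ_ (𝟙_ C)).hom)

/-- The associator in coordinates. -/
def associatorVal (x y z : C) : B := P.val (α_ x y z).hom

/-- The braiding in coordinates. -/
def braidingVal [BraidedCategory C] (x y : C) : B := P.val (β_ x y).hom

theorem isPicCocycle [SymmetricCategory C] (hres : ∀ g : C, (β_ g g).hom = 𝟙 (g ⊗ g)) :
    IsPicCocycle (fun a b c => P.associatorVal (P.cls.symm a) (P.cls.symm b) (P.cls.symm c))
      (fun a b => P.braidingVal (P.cls.symm a) (P.cls.symm b)) := by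
  have symm_add (a b : A) : P.cls.symm (a + b) = P.cls.symm a ⊗ P.cls.symm b := by
    rw [Equiv.symm_apply_eq, P.cls_tensor, Equiv.apply_symm_apply, Equiv.apply_symm_apply]
  refine ⟨fun w x y z => ?_, fun x y z => ?_, fun x y => ?_, fun x => ?_⟩
  · have := congrArg P.val (pentagon (P.cls.symm w) (P.cls.symm x) (P.cls.symm y) (P.cls.symm z))
    simp only [symm_add]
    simpa only [associatorVal, val_comp, val_whiskerLeft, val_whiskerRight, add_assoc] using this
  · have := congrArg P.val
      (BraidedCategory.hexagon_forward (P.cls.symm x) (P.cls.symm y) (P.cls.symm z))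
    simp only [symm_add]
    simpa only [associatorVal, braidingVal, val_comp, val_whiskerLeft, val_whiskerRight,
      add_assoc] using this
  · rw [braidingVal, braidingVal, ← val_comp, SymmetricCategory.symmetry, val_id]
  · rw [braidingVal, hres, val_id]

theorem exists_trivialization [SymmetricCategory C] (hres : ∀ g : C, (β_ g g).hom = 𝟙 (g ⊗ g)) :
    ∃ m : A → A → B,
      (∀ x y z, P.associatorVal x y z = coboundary m (P.cls x) (P.cls y) (P.cls z)) ∧
      ∀ x y, P.braidingVal x y = m (P.cls x) (P.cls y) - m (P.cls y) (P.cls x) := by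
  obtain ⟨m, hα, hβ⟩ := (P.isPicCocycle hres).exists_trivialization
  exact ⟨m, fun x y z => by simp [← hα], fun x y => by simp [← hβ]⟩

/-- The functor to the model that records coordinates. -/
def toPicModel : C ⥤ PicModel A B where
  obj x := ⟨P.cls x⟩
  map f := ⟨P.val f, congrArg P.cls (P.eq_of_hom f)⟩
  map_id x := PicModel.hom_ext (P.val_id x)
  map_comp f g := PicModel.hom_ext (P.val_comp f g)

instance : P.toPicModel.IsEquivalence where
  faithful := ⟨fun {x y} f g h => by
    obtain rfl := P.eq_of_hom f
    exact (P.val_bijective x).1 congr(($h).val)⟩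
  full := ⟨fun {x y} f => by
    obtain rfl := P.cls.injective f.eq
    exact ((P.val_bijective x).2 f.val).imp fun _ => PicModel.hom_ext⟩
  essSurj := ⟨fun a => ⟨P.cls.symm a.cls, ⟨PicModel.mkIso 0 (P.cls.apply_symm_apply _)⟩⟩⟩

variable {m : A → A → B}

theorem val_leftUnitor
    (hα : ∀ x y z, P.associatorVal x y z = coboundary m (P.cls x) (P.cls y) (P.cls z)) (x : C) :
    P.val (λ_ x).hom = m 0 (P.cls x) + (P.val (λ_ (𝟙_ C)).hom - m 0 0) := by
  have hunit := congrArg P.val (leftUnitor_tensor_hom (𝟙_ C) x)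
  have hnat := congrArg P.val (leftUnitor_naturality (λ_ x).hom)
  have hassoc := hα (𝟙_ C) (𝟙_ C) x
  simp only [val_comp, val_whiskerRight, val_whiskerLeft, val_inv] at hunit hnat
  simp only [associatorVal, coboundary, P.cls_unit, zero_add] at hassoc
  grind

theorem val_rightUnitor [SymmetricCategory C]
    (hα : ∀ x y z, P.associatorVal x y z = coboundary m (P.cls x) (P.cls y) (P.cls z))
    (hβ : ∀ x y, P.braidingVal x y = m (P.cls x) (P.cls y) - m (P.cls y) (P.cls x)) (x : C) :
    P.val (ρ_ x).hom = m (P.cls x) 0 + (P.val (λ_ (𝟙_ C)).hom - m 0 0) := by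
  rw [← braiding_leftUnitor, val_comp, ← braidingVal, hβ, P.val_leftUnitor hα, cls_unit]
  abel

theorem nonempty_braided_toPicModel [SymmetricCategory C]
    (hα : ∀ x y z, P.associatorVal x y z = coboundary m (P.cls x) (P.cls y) (P.cls z))
    (hβ : ∀ x y, P.braidingVal x y = m (P.cls x) (P.cls y) - m (P.cls y) (P.cls x)) :
    Nonempty P.toPicModel.Braided :=
  let core : P.toPicModel.CoreMonoidal :=
    { εIso := PicModel.mkIso (m 0 0 - P.val (λ_ (𝟙_ C)).hom) P.cls_unit.symm
      μIso x y := PicModel.mkIso (- m (P.cls x) (P.cls y)) (P.cls_tensor x y).symm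
      μIso_hom_natural_left {x y} f z := PicModel.hom_ext <| by
        obtain rfl := P.eq_of_hom f
        exact (add_comm _ _).trans congr(_ + $((P.val_whiskerRight f z).symm))
      μIso_hom_natural_right {x y} z f := PicModel.hom_ext <| by
        obtain rfl := P.eq_of_hom f
        exact (add_comm _ _).trans congr(_ + $((P.val_whiskerLeft z f).symm))
      associativity x y z := PicModel.hom_ext <| by
        change -m (P.cls x) (P.cls y) + (-m (P.cls (x ⊗ y)) (P.cls z) + P.associatorVal x y z) =
          0 + (-m (P.cls y) (P.cls z) + -m (P.cls x) (P.cls (y ⊗ z)))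
        rw [hα, coboundary, P.cls_tensor, P.cls_tensor]
        abel
      left_unitality x := PicModel.hom_ext <| by
        change 0 = (m 0 0 - P.val (λ_ (𝟙_ C)).hom) +
          (-m (P.cls (𝟙_ C)) (P.cls x) + P.val (λ_ x).hom)
        rw [P.val_leftUnitor hα x, P.cls_unit]
        abel
      right_unitality x := PicModel.hom_ext <| by
        change 0 = (m 0 0 - P.val (λ_ (𝟙_ C)).hom) +
          (-m (P.cls x) (P.cls (𝟙_ C)) + P.val (ρ_ x).hom)
        rw [P.val_rightUnitor hα hβ, P.cls_unit]
        abel }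
  ⟨{ core.toMonoidal with
    braided x y := PicModel.hom_ext <| by
      change -m (P.cls x) (P.cls y) + P.braidingVal x y = 0 + -m (P.cls y) (P.cls x)
      rw [hβ]
      abel }⟩

end PicCoordinates

theorem exists_picModel [SymmetricCategory C] (hC : IsGrCategory C)
    (hres : ∀ g : C, (β_ g g).hom = 𝟙 (g ⊗ g)) :
    ∃ (A : Type u) (B : Type v) (_ : AddCommGroup A) (_ : AddCommGroup B),
      Nonempty (SymmetricMonoidalEquiv C (PicModel A B)) := by
  obtain ⟨E, _, _, _, F, hskel, ⟨_⟩, _⟩ := exists_skeletal C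
  obtain ⟨A, B, _, _, ⟨P⟩⟩ := PicCoordinates.exists_of_skeletal (hC.of_isEquivalence F) hskel
  obtain ⟨m, hα, hβ⟩ := P.exists_trivialization (braiding_self_eq_id_of_faithful F hres)
  obtain ⟨_⟩ := P.nonempty_braided_toPicModel hα hβ
  obtain ⟨s⟩ := SymmetricMonoidalEquiv.nonempty_of_functor F
  obtain ⟨t⟩ := SymmetricMonoidalEquiv.nonempty_of_functor P.toPicModel
  exact ⟨A, B, _, _, s.symm.nonempty_trans t⟩

end Coordinates

/-- Two restrained Pic-categories are equivalent as symmetric monoidal categories if and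
only if their abelian groups of isomorphism classes of objects are isomorphic and their
abelian groups of automorphisms of the unit objects are isomorphic. -/
theorem restrained_pic_categories_equivalent_iff
    {C : Type u} [Category.{v} C] [MonoidalCategory C] [SymmetricCategory C]
    {D : Type u'} [Category.{v'} D] [MonoidalCategory D] [SymmetricCategory D]
    (hgrC : IsGrCategory C) (hgrD : IsGrCategory D)
    (hresC : ∀ g : C, (β_ g g).hom = 𝟙 (g ⊗ g))
    (hresD : ∀ g : D, (β_ g g).hom = 𝟙 (g ⊗ g)) :
    Nonempty (SymmetricMonoidalEquiv C D) ↔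
      ((∃ φ : Quotient (CategoryTheory.isIsomorphicSetoid C) ≃
              Quotient (CategoryTheory.isIsomorphicSetoid D),
          ∀ a b, φ (tensorIsoClass a b) = tensorIsoClass (φ a) (φ b)) ∧
        Nonempty (Aut (𝟙_ C) ≃* Aut (𝟙_ D))) := by
  constructor
  · rintro ⟨s⟩
    exact s.haveIsomorphicInvariants
  · intro h
    obtain ⟨A, B, _, _, ⟨s⟩⟩ := exists_picModel hgrC hresC
    obtain ⟨A', B', _, _, ⟨t⟩⟩ := exists_picModel hgrD hresD
    obtain ⟨e⟩ := PicModel.nonempty_symmetricMonoidalEquiv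
      (s.symm.haveIsomorphicInvariants.trans (.trans h t.haveIsomorphicInvariants))
    obtain ⟨s'⟩ := s.nonempty_trans e
    exact s'.nonempty_trans t.symm
end
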